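/- Let s ≥ 2, k, r and n be integers with 1 ≤ r ≤ k and n ≥ s·k. Then S_r^(s)(n,k) = C(n−r−1, s−1)·S_r^(s)(n−s, k−1) + r·C(n−r−1, s−2)·S_{r−1}^(s)(n−s, k−1) + k·S_r^(s)(n−1, k). -/

import Mathlib

/-!
The proof is by exponential generating functions. Write `E_m = ∑_{i ≥ m} x^i / i!`
(`expTail m`). For `r ≤ k` and `r ≤ n`, the defining sum says that

  `S_r^(s)(n, k) = (n - r)! / (k - r)! · [x^(n-r)] E_{s-1}^r E_s^(k-r)`

(`assocRStirling2_eq_coeff`). The tails satisfy `E_{m+1}' = E_m = E_{m+1} + x^m / m!`, so with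
`q = k - r` Leibniz' rule gives

  `(E_{s-1}^r E_s^q)' = (r + q) E_{s-1}^r E_s^q + r x^(s-2)/(s-2)! E_{s-1}^(r-1) E_s^q`
  `  + q x^(s-1)/(s-1)! E_{s-1}^r E_s^(q-1)`

(`derivative_expTail_pow_mul_pow`). Comparing the coefficients of `x^(n-r-1)` yields the
recurrence; a monomial factor `x^j / j!` turns into a binomial coefficient
(`choose_mul_factorial_mul_coeff`).
-/

/-- The `s`-associated `r`-Stirling number of the second kind `S_r^(s)(n,k)`,
as a rational number. -/
def assocRStirling2 (s r n k : ℕ) : ℚ :=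
  if k = 0 then (if n = 0 ∧ r = 0 then 1 else 0)
  else if n < s * k ∨ k < r then 0
  else ((n - r).factorial : ℚ) / (k - r).factorial *
    ∑ i ∈ Finset.Nat.antidiagonalTuple k (n - s * k),
      ∏ j : Fin k,
        (1 : ℚ) / ((i j + (if (j : ℕ) < r then s - 1 else s)).factorial : ℚ)

open PowerSeries in
/-- The tail `∑_{i ≥ m} x^i / i!` of the exponential series: the exponential generating
function of sets with at least `m` elements. -/
noncomputable def expTail (m : ℕ) : PowerSeries ℚ :=
  PowerSeries.mk fun i => if m ≤ i then (1 : ℚ) / (i.factorial : ℚ) else 0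

open PowerSeries in
lemma expTail_eq_X_pow_mul (m : ℕ) :
    expTail m = X ^ m * PowerSeries.mk fun i => (1 : ℚ) / ((i + m).factorial : ℚ) := by
  ext i
  rw [coeff_X_pow_mul', expTail, coeff_mk]
  split_ifs with h
  · rw [coeff_mk, Nat.sub_add_cancel h]
  · rfl

open PowerSeries in
lemma expTail_eq_succ_add (m : ℕ) :
    expTail m = expTail (m + 1) + C (1 / (m.factorial : ℚ)) * X ^ m := by
  ext i
  rw [map_add, coeff_C_mul, coeff_X_pow, expTail, expTail, coeff_mk, coeff_mk]
  rcases lt_trichotomy i m with h | h | h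
  · rw [if_neg (by omega), if_neg (by omega), if_neg (by omega)]; simp
  · subst h; simp
  · rw [if_pos (by omega), if_pos (by omega), if_neg (by omega)]; simp

open PowerSeries in
lemma derivative_expTail_succ (m : ℕ) : derivative ℚ (expTail (m + 1)) = expTail m := by
  ext i
  rw [coeff_derivative, expTail, expTail, coeff_mk, coeff_mk]
  by_cases h : m ≤ i
  · rw [if_pos (by omega), if_pos h, Nat.factorial_succ]
    have := Nat.factorial_ne_zero i
    push_cast
    field_simp
  · rw [if_neg (by omega), if_neg h, zero_mul]

open PowerSeries in
/-- The differential equation behind the recurrence, with `s = t + 2`. At `r = 0` or `q = 0` the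
truncated exponent `r - 1` or `q - 1` is harmless, since the term has the factor `r` or `q`. -/
lemma derivative_expTail_pow_mul_pow (t r q : ℕ) :
    derivative ℚ (expTail (t + 1) ^ r * expTail (t + 2) ^ q)
      = C ((r : ℚ) + q) * (expTail (t + 1) ^ r * expTail (t + 2) ^ q)
        + C ((r : ℚ) / t.factorial) * (X ^ t * (expTail (t + 1) ^ (r - 1) * expTail (t + 2) ^ q))
        + C ((q : ℚ) / (t + 1).factorial)
          * (X ^ (t + 1) * (expTail (t + 1) ^ r * expTail (t + 2) ^ (q - 1))) := by
  have hpow : ∀ m j : ℕ, derivative ℚ (expTail (m + 1) ^ j)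
      = C (j : ℚ) * expTail (m + 1) ^ j
        + C ((j : ℚ) / m.factorial) * (X ^ m * expTail (m + 1) ^ (j - 1)) := by
    intro m j
    rw [derivative_pow, derivative_expTail_succ, expTail_eq_succ_add m, div_eq_mul_one_div (j : ℚ),
      map_mul C, map_natCast C]
    cases j with
    | zero => simp
    | succ j => rw [Nat.add_sub_cancel]; ring
  rw [Derivation.leibniz, hpow t r, hpow (t + 1) q, smul_eq_mul, smul_eq_mul, map_add]
  ring

open PowerSeries in
lemma sum_antidiagonalTuple_prod (k d : ℕ) (f : Fin k → ℕ → ℚ) :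
    ∑ i ∈ Finset.Nat.antidiagonalTuple k d, ∏ j, f j (i j)
      = coeff d (∏ j, PowerSeries.mk (f j)) := by
  rw [coeff_prod]
  refine Finset.sum_bij' (fun i _ => Finsupp.equivFunOnFinite.symm i) (fun l _ => l) ?_ ?_ ?_ ?_ ?_
  · intro i hi
    simpa [Finset.mem_finsuppAntidiag, Finset.Nat.mem_antidiagonalTuple] using hi
  · intro l hl
    simpa [Finset.mem_finsuppAntidiag, Finset.Nat.mem_antidiagonalTuple] using hl
  · intro i _; rfl
  · intro l _; ext; rfl
  · intro i _; simp

open PowerSeries in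
/-- The closed form of `S_r^(s)(n, r + q)` as a coefficient. It also covers the values set by
convention: for `n < s * (r + q)` the coefficient vanishes because the series has order
`s * (r + q) - r`. -/
lemma assocRStirling2_eq_coeff (s r q n : ℕ) (hs : 1 ≤ s) (hrn : r ≤ n) :
    assocRStirling2 s r n (r + q)
      = ((n - r).factorial : ℚ) / q.factorial
        * coeff (n - r) (expTail (s - 1) ^ r * expTail s ^ q) := by
  obtain ⟨u, rfl⟩ : ∃ u, s = u + 1 := ⟨s - 1, by omega⟩
  have hfactor : expTail u ^ r * expTail (u + 1) ^ q
      = X ^ (u * r + (u + 1) * q) * ∏ j : Fin (r + q), PowerSeries.mk fun i =>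
          (1 : ℚ) / ((i + (if (j : ℕ) < r then u else u + 1)).factorial : ℚ) := by
    rw [Fin.prod_univ_add, expTail_eq_X_pow_mul, expTail_eq_X_pow_mul]
    simp only [Fin.val_castAdd, Fin.val_natAdd, Fin.is_lt, if_true,
      Nat.not_lt.2 (Nat.le_add_right r _), if_false, Finset.prod_const, Finset.card_univ,
      Fintype.card_fin]
    rw [mul_pow, mul_pow, ← pow_mul, ← pow_mul, pow_add]
    ring
  have hexp : (u + 1) * (r + q) = u * r + (u + 1) * q + r := by ring
  rw [Nat.add_sub_cancel, hfactor, coeff_X_pow_mul', assocRStirling2]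
  by_cases hk : r + q = 0
  · obtain ⟨rfl, rfl⟩ : r = 0 ∧ q = 0 := by omega
    by_cases hn : n = 0 <;> simp [hn, coeff_one]
  · rw [if_neg hk]
    by_cases hn : n < (u + 1) * (r + q)
    · rw [if_pos (Or.inl hn), if_neg (by omega), mul_zero]
    · rw [if_neg (by omega), if_pos (by omega), Nat.add_sub_cancel_left,
        ← sum_antidiagonalTuple_prod, Nat.add_sub_cancel]
      congr 3
      omega

open PowerSeries in
/-- Both sides vanish when `N < j`. -/
lemma choose_mul_factorial_mul_coeff (N j : ℕ) (p : PowerSeries ℚ) :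
    (N.choose j : ℚ) * (((N - j).factorial : ℚ) * coeff (N - j) p)
      = (N.factorial : ℚ) / j.factorial * coeff N (X ^ j * p) := by
  rw [coeff_X_pow_mul']
  split_ifs with h
  · have := Nat.factorial_ne_zero j
    rw [← Nat.choose_mul_factorial_mul_factorial h]
    push_cast
    field_simp
  · rw [Nat.choose_eq_zero_of_lt (by omega)]; simp

theorem assocRStirling2_triangular_rec (s r n k : ℕ) (hs : 2 ≤ s) (hr : 1 ≤ r)
    (hrk : r ≤ k) (hn : s * k ≤ n) :
    assocRStirling2 s r n k
      = (Nat.choose (n - r - 1) (s - 1) : ℚ) * assocRStirling2 s r (n - s) (k - 1)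
        + (r : ℚ) * Nat.choose (n - r - 1) (s - 2) * assocRStirling2 s (r - 1) (n - s) (k - 1)
        + (k : ℚ) * assocRStirling2 s r (n - 1) k := by
  obtain ⟨t, rfl⟩ : ∃ t, s = t + 2 := ⟨s - 2, by omega⟩
  obtain ⟨ρ, rfl⟩ : ∃ ρ, r = ρ + 1 := ⟨r - 1, by omega⟩
  obtain ⟨q, rfl⟩ : ∃ q, k = ρ + 1 + q := ⟨k - (ρ + 1), by omega⟩
  have hlow : (t + 2) + (ρ + q) ≤ n := by nlinarith [Nat.zero_le (t * (ρ + q))]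
  have hlow' : 2 * (ρ + 1) ≤ n := by
    nlinarith [Nat.zero_le (t * (ρ + 1 + q))]
  obtain ⟨N, rfl⟩ : ∃ N, n = N + 1 + (ρ + 1) := ⟨n - 1 - (ρ + 1), by omega⟩
  -- the coefficient of `x^N` in the differential equation
  have hcoeff := congrArg (PowerSeries.coeff N) (derivative_expTail_pow_mul_pow t (ρ + 1) q)
  simp only [PowerSeries.coeff_derivative, map_add (PowerSeries.coeff N),
    PowerSeries.coeff_C_mul, Nat.add_sub_cancel] at hcoeff
  have hq : (q.factorial : ℚ) ≠ 0 := by exact_mod_cast q.factorial_ne_zero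
  -- the block of the largest element has size `s` and contains none of `1, …, r`
  have h₁ : (N.choose (t + 1) : ℚ)
        * assocRStirling2 (t + 2) (ρ + 1) (N + 1 + (ρ + 1) - (t + 2)) (ρ + q)
      = (N.factorial : ℚ) / q.factorial * ((q : ℚ) / (t + 1).factorial
        * PowerSeries.coeff N (PowerSeries.X ^ (t + 1)
          * (expTail (t + 1) ^ (ρ + 1) * expTail (t + 2) ^ (q - 1)))) := by
    cases q with
    | zero =>
      have : assocRStirling2 (t + 2) (ρ + 1) (N + 1 + (ρ + 1) - (t + 2)) (ρ + 0) = 0 := by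
        rw [assocRStirling2]
        by_cases hρ : ρ + 0 = 0
        · rw [if_pos hρ, if_neg (fun h => Nat.succ_ne_zero ρ h.2)]
        · rw [if_neg hρ, if_pos (Or.inr (by omega))]
      rw [this]; simp
    | succ q =>
      have hq' : (q.factorial : ℚ) ≠ 0 := by exact_mod_cast q.factorial_ne_zero
      have hc := choose_mul_factorial_mul_coeff N (t + 1)
        (expTail (t + 1) ^ (ρ + 1) * expTail (t + 2) ^ q)
      rw [show ρ + (q + 1) = ρ + 1 + q by ring,
        assocRStirling2_eq_coeff _ _ _ _ (by omega) (by omega),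
        show N + 1 + (ρ + 1) - (t + 2) - (ρ + 1) = N - (t + 1) by omega,
        show t + 2 - 1 = t + 1 by omega, Nat.add_sub_cancel, Nat.factorial_succ q]
      push_cast
      rw [div_mul_eq_mul_div, mul_div_assoc', hc]
      field_simp
  -- the block of the largest element has size `s` and contains one of `1, …, r`
  have h₂ : (N.choose t : ℚ) * assocRStirling2 (t + 2) ρ (N + 1 + (ρ + 1) - (t + 2)) (ρ + q)
      = (N.factorial : ℚ) / q.factorial * (1 / t.factorial
        * PowerSeries.coeff N (PowerSeries.X ^ t
          * (expTail (t + 1) ^ ρ * expTail (t + 2) ^ q))) := by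
    have hc := choose_mul_factorial_mul_coeff N t (expTail (t + 1) ^ ρ * expTail (t + 2) ^ q)
    rw [assocRStirling2_eq_coeff _ _ _ _ (by omega) (by omega),
      show N + 1 + (ρ + 1) - (t + 2) - ρ = N - t by omega,
      show t + 2 - 1 = t + 1 by omega, div_mul_eq_mul_div, mul_div_assoc', hc]
    field_simp
  rw [show N + 1 + (ρ + 1) - (ρ + 1) - 1 = N by omega, show t + 2 - 1 = t + 1 by omega,
    show t + 2 - 2 = t by omega, show ρ + 1 + q - 1 = ρ + q by omega,
    show ρ + 1 - 1 = ρ by omega, h₁, mul_assoc, h₂,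
    assocRStirling2_eq_coeff _ _ _ _ (by omega) (by omega),
    assocRStirling2_eq_coeff _ _ _ _ (by omega) (by omega),
    show N + 1 + (ρ + 1) - (ρ + 1) = N + 1 by omega,
    show N + 1 + (ρ + 1) - 1 - (ρ + 1) = N by omega,
    show t + 2 - 1 = t + 1 by omega, Nat.factorial_succ N]
  push_cast at hcoeff ⊢
  linear_combination (N.factorial : ℚ) / q.factorial * hcoeff
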